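/- arXiv:1005.1596 — 5 statements merged into one kernel-verified Lean document; each statement's English description precedes it below -/
import Mathlib

section
/- For every nonzero real number α the polynomial p + αq has exactly k roots, all of which are real and simple; moreover, exactly one of these roots lies in each open interval (p_j, p_{j+1}) for j = 1,…,k−1, and exactly one of them lies in ℝ ∖ [p_1, p_k]. -/
/-!
Write `f = p + α q`. At the roots of `p` one has `f = α q`, and interlacing makes `q` change sign
exactly once between consecutive roots of `p`; hence `f` has a root `y j` in each of the gaps
(`exists_root_gap`). Since `f` is monic of degree one more than the number of gaps, it factors as
`∏ (X - y j) * (X - z)` with `z` real (`exists_last_root`). Evaluating at the smallest and the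
largest root of `p`, where `∏ (X - y j)` and `q` have the same sign, shows that both `p_1 - z` and
`p_k - z` have the sign of `α`: thus `z > p_k` if `α < 0` and `z < p_1` if `α > 0`. In the first
case `z` is appended to the list of the `y j`, in the second it is prepended.
-/


open Polynomial

/-- The monic real polynomial with prescribed roots. -/
noncomputable def rootPoly {n : ℕ} (r : Fin n → ℝ) : Polynomial ℝ :=
  ∏ i, (X - C (r i))

/-- Inclusion `Fin (k-1) → Fin k` (index of the left endpoint). -/
def finLo {k : ℕ} (i : Fin (k - 1)) : Fin k := ⟨i.1, by have := i.2; omega⟩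

/-- Index of the right endpoint. -/
def finHi {k : ℕ} (i : Fin (k - 1)) : Fin k := ⟨i.1 + 1, by have := i.2; omega⟩

/-- The Wronskian `W(p,q) = p'q - q'p`. -/
noncomputable def wron (p q : Polynomial ℝ) : Polynomial ℝ :=
  derivative p * q - derivative q * p

/-- Writing `f = p + α q`, the interlacing makes `q` change sign between consecutive roots of `p`,
where `f = α q`; the intermediate value theorem then gives a root of `f` in the gap. -/
lemma exists_root_gap {n : ℕ} (pr : Fin (n + 1) → ℝ) (qr : Fin n → ℝ)
    (hpr : StrictMono pr)
    (hint : ∀ i : Fin n, pr i.castSucc < qr i ∧ qr i < pr i.succ)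
    (α : ℝ) (hα : α ≠ 0) (j : Fin n) :
    ∃ y ∈ Set.Ioo (pr j.castSucc) (pr j.succ),
      (rootPoly pr + C α * rootPoly qr).eval y = 0 := by
  set f := rootPoly pr + C α * rootPoly qr with hf
  have hval : ∀ i, f.eval (pr i) = α * ∏ l, (pr i - qr l) := by
    intro i
    have : ∏ l, (pr i - pr l) = 0 := Finset.prod_eq_zero (Finset.mem_univ i) (sub_self _)
    simp [hf, rootPoly, eval_prod, this]
  have hneg : f.eval (pr j.castSucc) * f.eval (pr j.succ) < 0 := by
    have hprod : ∏ l, ((pr j.castSucc - qr l) * (pr j.succ - qr l)) < 0 := by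
      rw [← Finset.mul_prod_erase _ _ (Finset.mem_univ j)]
      refine mul_neg_of_neg_of_pos ?_ (Finset.prod_pos ?_)
      · exact mul_neg_of_neg_of_pos (by linarith [(hint j).1]) (by linarith [(hint j).2])
      · intro l hl
        rcases lt_or_gt_of_ne (Finset.ne_of_mem_erase hl) with h | h
        · have h1 : pr l.succ ≤ pr j.castSucc := hpr.monotone (by
            simp only [Fin.le_def, Fin.val_succ, Fin.val_castSucc]; exact h)
          have h2 : pr j.castSucc < pr j.succ := hpr Fin.castSucc_lt_succ
          have := (hint l).2
          exact mul_pos (by linarith) (by linarith)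
        · have h1 : pr j.succ ≤ pr l.castSucc := hpr.monotone (by
            simp only [Fin.le_def, Fin.val_succ, Fin.val_castSucc]; exact h)
          have h2 : pr j.castSucc < pr j.succ := hpr Fin.castSucc_lt_succ
          have := (hint l).1
          exact mul_pos_of_neg_of_neg (by linarith) (by linarith)
    rw [Finset.prod_mul_distrib] at hprod
    rw [hval, hval]
    have : 0 < α ^ 2 := by positivity
    nlinarith
  have hle : pr j.castSucc ≤ pr j.succ := (hpr Fin.castSucc_lt_succ).le
  rcases mul_neg_iff.1 hneg with ⟨h1, h2⟩ | ⟨h1, h2⟩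
  · obtain ⟨y, hy, h⟩ := intermediate_value_Ioo' hle f.continuous.continuousOn ⟨h2, h1⟩
    exact ⟨y, hy, h⟩
  · obtain ⟨y, hy, h⟩ := intermediate_value_Ioo hle f.continuous.continuousOn ⟨h1, h2⟩
    exact ⟨y, hy, h⟩

lemma rootPoly_monic {n : ℕ} (r : Fin n → ℝ) : (rootPoly r).Monic :=
  monic_prod_of_monic _ _ fun i _ => monic_X_sub_C (r i)

lemma rootPoly_natDegree {n : ℕ} (r : Fin n → ℝ) : (rootPoly r).natDegree = n := by
  rw [rootPoly, natDegree_prod_of_monic _ _ fun i _ => monic_X_sub_C (r i)]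
  simp

/-- A monic polynomial of degree `n + 1` with `n` distinct known roots has one more real root. -/
lemma exists_last_root {n : ℕ} (f : ℝ[X]) (hf : f.Monic) (hd : f.natDegree = n + 1)
    (y : Fin n → ℝ) (hy : Function.Injective y) (h0 : ∀ j, f.eval (y j) = 0) :
    ∃ z : ℝ, f = rootPoly y * (X - C z) := by
  have hdvd : rootPoly y ∣ f := by
    refine Finset.prod_dvd_of_coprime ?_ fun i _ => dvd_iff_isRoot.2 (h0 i)
    exact fun i _ j _ hij => pairwise_coprime_X_sub_C hy hij
  obtain ⟨g, rfl⟩ := hdvd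
  have hg : g.Monic := (rootPoly_monic y).of_mul_monic_left hf
  have hgd : g.natDegree = 1 := by
    rw [(rootPoly_monic y).natDegree_mul hg, rootPoly_natDegree] at hd
    omega
  refine ⟨-g.coeff 0, ?_⟩
  rw [C_neg, sub_neg_eq_add, ← hg.eq_X_add_C hgd]

/-- The statement with the roots of `p` indexed by `Fin (n + 1)`, so that the endpoints of the
`j`-th gap are `pr j.castSucc` and `pr j.succ`. -/
lemma stmt2_succ (n : ℕ) (pr : Fin (n + 1) → ℝ) (qr : Fin n → ℝ)
    (hpr : StrictMono pr)
    (hint : ∀ i : Fin n, pr i.castSucc < qr i ∧ qr i < pr i.succ)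
    (α : ℝ) (hα : α ≠ 0) :
    ∃ x : Fin (n + 1) → ℝ, StrictMono x ∧
      rootPoly pr + C α * rootPoly qr = rootPoly x ∧
      (∀ j : Fin n, ∃! i, x i ∈ Set.Ioo (pr j.castSucc) (pr j.succ)) ∧
      (∃! i, x i ∉ Set.Icc (pr 0) (pr (Fin.last n))) := by
  choose y hyI hy0 using exists_root_gap pr qr hpr hint α hα
  have hyle : ∀ i j : Fin n, i < j → pr i.succ ≤ pr j.castSucc := fun i j h =>
    hpr.monotone (by simp only [Fin.le_def, Fin.val_succ, Fin.val_castSucc]; exact h)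
  have hymono : StrictMono y := fun i j h =>
    ((hyI i).2.trans_le (hyle i j h)).trans (hyI j).1
  have hp0 : ∀ i, pr 0 ≤ pr i := fun i => hpr.monotone (Fin.zero_le i)
  have hp1 : ∀ i, pr i ≤ pr (Fin.last n) := fun i => hpr.monotone (Fin.le_last i)
  have hgap : ∀ i j : Fin n, y i ∈ Set.Ioo (pr j.castSucc) (pr j.succ) → i = j := by
    intro i j h
    rcases lt_trichotomy i j with hij | hij | hij
    · linarith [hyle i j hij, (hyI i).2, h.1]
    · exact hij
    · linarith [hyle j i hij, (hyI i).1, h.2]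
  have hyIcc : ∀ i, y i ∈ Set.Icc (pr 0) (pr (Fin.last n)) := fun i =>
    ⟨(hp0 _).trans (hyI i).1.le, (hyI i).2.le.trans (hp1 _)⟩
  have hlt : (C α * rootPoly qr).degree < (rootPoly pr).degree := by
    rw [degree_C_mul hα, degree_eq_natDegree (rootPoly_monic qr).ne_zero,
      degree_eq_natDegree (rootPoly_monic pr).ne_zero, rootPoly_natDegree, rootPoly_natDegree]
    exact_mod_cast n.lt_succ_self
  obtain ⟨z, hz⟩ := exists_last_root (n := n) _ ((rootPoly_monic pr).add_of_left hlt)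
    (by rw [natDegree_add_eq_left_of_degree_lt hlt, rootPoly_natDegree]) y
    hymono.injective hy0
  have heval : ∀ i, α * ∏ l, (pr i - qr l) = (∏ l, (pr i - y l)) * (pr i - z) := by
    intro i
    have h := congrArg (eval (pr i)) hz
    have : ∏ l, (pr i - pr l) = 0 := Finset.prod_eq_zero (Finset.mem_univ i) (sub_self _)
    simpa [rootPoly, eval_prod, this] using h
  -- At an extreme root `pr i` of `p`, all `pr i - qr l` and `pr i - y l` have one common sign,
  -- so `pr i - z` has the sign of `α`.
  have hsign : ∀ i, (∀ l, 0 < (pr i - y l) * (pr i - qr l)) → 0 < α * (pr i - z) := by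
    intro i hi
    have hpos : 0 < ∏ l, ((pr i - y l) * (pr i - qr l)) := Finset.prod_pos fun l _ => hi l
    rw [Finset.prod_mul_distrib] at hpos
    have h := heval i
    set A := ∏ l, (pr i - y l)
    set B := ∏ l, (pr i - qr l)
    have hA : A ≠ 0 := by rintro h0; simp [h0] at hpos
    have hA2 : 0 < A ^ 2 := by positivity
    have hα2 : 0 < α ^ 2 := by positivity
    have h3 : A ^ 2 * (α * (pr i - z)) = α ^ 2 * (A * B) := by linear_combination (-A * α) * h
    have : 0 < A ^ 2 * (α * (pr i - z)) := by rw [h3]; positivity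
    exact pos_of_mul_pos_right this hA2.le
  have hs0 : 0 < α * (pr 0 - z) := hsign 0 fun l => by
    have := hp0 l.castSucc
    exact mul_pos_of_neg_of_neg (by linarith [(hyI l).1]) (by linarith [(hint l).1])
  have hs1 : 0 < α * (pr (Fin.last n) - z) := hsign _ fun l => by
    have := hp1 l.succ
    exact mul_pos (by linarith [(hyI l).2]) (by linarith [(hint l).2])
  rcases lt_or_gt_of_ne hα with hneg | hpos
  · have hzgt : pr (Fin.last n) < z := by nlinarith
    have hzI : z ∉ Set.Icc (pr 0) (pr (Fin.last n)) := fun h => by linarith [h.2]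
    refine ⟨Fin.snoc y z, ?_, ?_, ?_, ?_⟩
    · intro i j hij
      induction j using Fin.lastCases with
      | last =>
        induction i using Fin.lastCases with
        | last => exact absurd hij (lt_irrefl _)
        | cast i => simpa using (hyIcc i).2.trans_lt hzgt
      | cast j =>
        induction i using Fin.lastCases with
        | last => exact absurd hij (not_lt.2 (Fin.le_last _))
        | cast i => simpa using hymono (by simpa using hij)
    · rw [hz]; simp [rootPoly, Fin.prod_univ_castSucc]
    · intro j
      refine ⟨j.castSucc, by simpa using hyI j, ?_⟩
      intro i hi
      induction i using Fin.lastCases with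
      | last =>
        simp only [Fin.snoc_last] at hi
        linarith [hi.2, hp1 j.succ]
      | cast i => rw [hgap i j (by simpa using hi)]
    · refine ⟨Fin.last n, by simpa using hzI, ?_⟩
      intro i hi
      induction i using Fin.lastCases with
      | last => rfl
      | cast i => exact absurd (hyIcc i) (by simpa using hi)
  · have hzlt : z < pr 0 := by nlinarith
    have hzI : z ∉ Set.Icc (pr 0) (pr (Fin.last n)) := fun h => by linarith [h.1]
    refine ⟨Fin.cons z y, ?_, ?_, ?_, ?_⟩
    · intro i j hij
      induction j using Fin.cases with
      | zero => exact absurd hij (not_lt.2 (Fin.zero_le _))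
      | succ j =>
        induction i using Fin.cases with
        | zero => simpa using hzlt.trans_le (hyIcc j).1
        | succ i => simpa using hymono (by simpa using hij)
    · rw [hz, mul_comm]; simp [rootPoly, Fin.prod_univ_succ]
    · intro j
      refine ⟨j.succ, by simpa using hyI j, ?_⟩
      intro i hi
      induction i using Fin.cases with
      | zero =>
        simp only [Fin.cons_zero] at hi
        linarith [hi.1, hp0 j.castSucc]
      | succ i => rw [hgap i j (by simpa using hi)]
    · refine ⟨0, by simpa using hzI, ?_⟩
      intro i hi
      induction i using Fin.cases with
      | zero => rfl
      | succ i => exact absurd (hyIcc i) (by simpa using hi)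

theorem stmt2 (k : ℕ) (hk : 2 ≤ k) (pr : Fin k → ℝ) (qr : Fin (k - 1) → ℝ)
    (hpr : StrictMono pr) (hqr : StrictMono qr)
    (hint : ∀ i : Fin (k - 1), pr (finLo i) < qr i ∧ qr i < pr (finHi i))
    (α : ℝ) (hα : α ≠ 0) :
    ∃ x : Fin k → ℝ, StrictMono x ∧
      rootPoly pr + C α * rootPoly qr = rootPoly x ∧
      (∀ j : Fin (k - 1), ∃! i : Fin k, x i ∈ Set.Ioo (pr (finLo j)) (pr (finHi j))) ∧
      (∃! i : Fin k, x i ∉ Set.Icc (pr ⟨0, by omega⟩) (pr ⟨k - 1, by omega⟩)) := by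
  obtain ⟨n, rfl⟩ : ∃ n, k = n + 1 := ⟨k - 1, by omega⟩
  exact stmt2_succ n pr qr hpr hint α hα
end

section
/- The Wronskian W(p,q) = p′q − q′p satisfies W(p,q)(x) > 0 for every real number x; in particular W(p,q) has no real roots. -/
/-!
Write `p_i` for the roots of `p` and `P_i = p / (X - p_i)`. Since `deg q < deg p`, Lagrange
interpolation at the `p_i` gives `q = ∑ c_i P_i` with `c_i = q(p_i) / P_i(p_i)`
(`rootPoly_eq_sum`). Interlacing makes every `c_i` positive: in `q(p_i) * P_i(p_i)` the factors
pair off into products of two numbers of the same sign (`eval_mul_eval_pos`). As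
`W((X - a) P, P) = P²` (`wron_X_sub_C_mul`), bilinearity of the Wronskian gives
`W(p, q) = ∑ c_i P_i²`, and at each real point at least one `P_i` does not vanish.
-/

open Polynomial

lemma eval_rootPoly {n : ℕ} (r : Fin n → ℝ) (x : ℝ) :
    eval x (rootPoly r) = ∏ i, (x - r i) := by
  simp [rootPoly, eval_prod]

lemma degree_rootPoly {n : ℕ} (r : Fin n → ℝ) : (rootPoly r).degree = n := by
  simp [rootPoly, degree_prod]

lemma rootPoly_eq_mul {n : ℕ} (r : Fin (n + 1) → ℝ) (i : Fin (n + 1)) :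
    rootPoly r = (X - C (r i)) * rootPoly (r ∘ i.succAbove) := by
  simp [rootPoly, Fin.prod_univ_succAbove _ i]

lemma wron_X_sub_C_mul (a : ℝ) (P : ℝ[X]) : wron ((X - C a) * P) P = P ^ 2 := by
  simp only [wron, derivative_mul, derivative_X_sub_C]
  ring

lemma wron_sum_C_mul {ι : Type*} (s : Finset ι) (p : ℝ[X]) (c : ι → ℝ) (P : ι → ℝ[X]) :
    wron p (∑ i ∈ s, C (c i) * P i) = ∑ i ∈ s, C (c i) * wron p (P i) := by
  simp only [wron, derivative_sum, derivative_C_mul, Finset.mul_sum, Finset.sum_mul,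
    ← Finset.sum_sub_distrib]
  exact Finset.sum_congr rfl fun i _ => by ring

lemma eval_rootPoly_comp_succAbove_ne_zero {n : ℕ} {r : Fin (n + 1) → ℝ}
    (hr : Function.Injective r) (i : Fin (n + 1)) :
    eval (r i) (rootPoly (r ∘ i.succAbove)) ≠ 0 := by
  rw [eval_rootPoly]
  refine Finset.prod_ne_zero_iff.2 fun j _ => sub_ne_zero.2 fun h => ?_
  exact Fin.succAbove_ne i j (hr h).symm

/-- Lagrange interpolation of `rootPoly s` at the points `r i`. -/
lemma rootPoly_eq_sum {n : ℕ} {r : Fin (n + 1) → ℝ} (hr : Function.Injective r)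
    (s : Fin n → ℝ) :
    rootPoly s = ∑ i, C (eval (r i) (rootPoly s) / eval (r i) (rootPoly (r ∘ i.succAbove))) *
      rootPoly (r ∘ i.succAbove) := by
  have hn : ((n : ℕ) : WithBot ℕ) < ((Finset.univ : Finset (Fin (n + 1))).card : ℕ) := by
    simp only [Finset.card_univ, Fintype.card_fin]
    exact_mod_cast n.lt_succ_self
  refine Polynomial.eq_of_degrees_lt_of_eval_index_eq Finset.univ hr.injOn
    (by rwa [degree_rootPoly]) ?_ fun j _ => ?_
  · refine (degree_sum_le _ _).trans_lt
      ((Finset.sup_lt_iff (bot_lt_of_lt hn)).2 fun i _ => ?_)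
    rw [← smul_eq_C_mul]
    exact ((degree_smul_le _ _).trans (degree_rootPoly _).le).trans_lt hn
  · rw [eval_finsetSum, Finset.sum_eq_single j]
    · rw [eval_mul, eval_C, div_mul_cancel₀ _ (eval_rootPoly_comp_succAbove_ne_zero hr j)]
    · intro i _ hij
      -- `r j` with `j ≠ i` is one of the roots of `P_i`
      obtain ⟨l, rfl⟩ := Fin.exists_succAbove_eq hij.symm
      rw [eval_mul, eval_rootPoly (r ∘ i.succAbove) (r (i.succAbove l)),
        Finset.prod_eq_zero (Finset.mem_univ l) (by simp), mul_zero]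
    · simp

/-- The factor `p_i - q_j` of `q(p_i)` is paired with the factor of `P_i(p_i)` coming from the
neighbour of `q_j` on the side away from `p_i`: this is `p_j` if `j < i` and `p_{j+1}` otherwise,
that is, `p (i.succAbove j)` in both cases. -/
lemma eval_mul_eval_pos {n : ℕ} {p : Fin (n + 1) → ℝ} {q : Fin n → ℝ} (hp : StrictMono p)
    (h : ∀ j : Fin n, p j.castSucc < q j ∧ q j < p j.succ) (i : Fin (n + 1)) :
    0 < eval (p i) (rootPoly q) * eval (p i) (rootPoly (p ∘ i.succAbove)) := by
  rw [eval_rootPoly, eval_rootPoly, ← Finset.prod_mul_distrib]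
  refine Finset.prod_pos fun j _ => ?_
  obtain ⟨h1, h2⟩ := h j
  simp only [Function.comp_apply]
  rcases lt_or_ge j.castSucc i with hj | hj
  · rw [Fin.succAbove_of_castSucc_lt _ _ hj]
    have h3 : p j.succ ≤ p i := hp.monotone (Fin.castSucc_lt_iff_succ_le.1 hj)
    exact mul_pos (by linarith) (by linarith)
  · rw [Fin.succAbove_of_le_castSucc _ _ hj]
    have h3 : p i ≤ p j.castSucc := hp.monotone hj
    exact mul_pos_of_neg_of_neg (by linarith) (by linarith)

lemma wron_pos {n : ℕ} {p : Fin (n + 1) → ℝ} {q : Fin n → ℝ} (hp : StrictMono p)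
    (h : ∀ j : Fin n, p j.castSucc < q j ∧ q j < p j.succ) (x : ℝ) :
    0 < eval x (wron (rootPoly p) (rootPoly q)) := by
  have hc (i : Fin (n + 1)) :
      0 < eval (p i) (rootPoly q) / eval (p i) (rootPoly (p ∘ i.succAbove)) := by
    have := eval_mul_eval_pos hp h i
    rwa [div_pos_iff, ← mul_pos_iff]
  have hW (i : Fin (n + 1)) :
      wron (rootPoly p) (rootPoly (p ∘ i.succAbove)) = rootPoly (p ∘ i.succAbove) ^ 2 := by
    rw [rootPoly_eq_mul p i, wron_X_sub_C_mul]
  rw [rootPoly_eq_sum hp.injective q, wron_sum_C_mul, eval_finsetSum]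
  simp only [hW, eval_mul, eval_C, eval_pow]
  -- some `P_i` is nonzero at `x`: take `i` with `x = p_i` if there is one, and any `i` otherwise
  have hex : ∃ i : Fin (n + 1), eval x (rootPoly (p ∘ i.succAbove)) ≠ 0 := by
    by_cases hx : ∃ i, p i = x
    · obtain ⟨i, rfl⟩ := hx
      exact ⟨i, eval_rootPoly_comp_succAbove_ne_zero hp.injective i⟩
    · refine ⟨0, ?_⟩
      rw [eval_rootPoly]
      exact Finset.prod_ne_zero_iff.2 fun j _ => sub_ne_zero.2 fun he => hx ⟨_, he.symm⟩
  obtain ⟨i, hi⟩ := hex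
  exact Finset.sum_pos' (fun j _ => mul_nonneg (hc j).le (sq_nonneg _))
    ⟨i, Finset.mem_univ i, mul_pos (hc i) (by positivity)⟩

theorem stmt5 (k : ℕ) (hk : 2 ≤ k) (pr : Fin k → ℝ) (qr : Fin (k - 1) → ℝ)
    (hpr : StrictMono pr) (hqr : StrictMono qr)
    (hint : ∀ i : Fin (k - 1), pr (finLo i) < qr i ∧ qr i < pr (finHi i)) :
    (∀ x : ℝ, 0 < eval x (wron (rootPoly pr) (rootPoly qr))) ∧
    ∀ x : ℝ, eval x (wron (rootPoly pr) (rootPoly qr)) ≠ 0 := by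
  obtain ⟨n, rfl⟩ : ∃ n, k = n + 1 := ⟨k - 1, by omega⟩
  have hpos : ∀ x : ℝ, 0 < eval x (wron (rootPoly pr) (rootPoly qr)) :=
    wron_pos (n := n) hpr hint
  exact ⟨hpos, fun x => (hpos x).ne'⟩
end

section
/- For every j = 1,…,k one has q(p_j)/p′(p_j) > 0, and for every z ∈ ℂ with p(z) ≠ 0 the partial-fraction expansion q(z)/p(z) = Σ_{j=1}^{k} (q(p_j)/p′(p_j)) · 1/(z − p_j) holds. -/
/-!
Since the roots `p_j` are distinct, `p'(p_j) = ∏_{i ≠ j} (p_j - p_i)`. Indexing the roots other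
than `p_j` by `j.succAbove`, the residue `q(p_j) / p'(p_j)` becomes a product over
`i : Fin (k - 1)` of the quotients `(p_j - q_i) / (p_j - p_{j.succAbove i})`. By interlacing,
`q_i` and the root `p_{j.succAbove i}` lie on the same side of `p_j`, so every factor is positive.

The partial-fraction expansion is Lagrange interpolation of `q` at the `k` roots of `p`, which is
exact because `deg q = k - 1 < k`, written in barycentric form: the barycentric weight of the node
`p_j` is `1 / p'(p_j)`.
-/

open Polynomial

/-- For every index `j`, the residue at `p_j` as a product of quotients of differences. -/
lemma residue_eq_prod {n : ℕ} (pr : Fin (n + 1) → ℝ) (qr : Fin n → ℝ) (j : Fin (n + 1)) :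
    eval (pr j) (rootPoly qr) / eval (pr j) (derivative (rootPoly pr)) =
      ∏ i : Fin n, (pr j - qr i) / (pr j - pr (j.succAbove i)) := by
  have h : rootPoly pr = (X - C (pr j)) * ∏ i : Fin n, (X - C (pr (j.succAbove i))) :=
    Fin.prod_univ_succAbove _ j
  rw [h, derivative_mul, Finset.prod_div_distrib]
  simp [rootPoly, eval_prod]

lemma residue_pos {n : ℕ} (pr : Fin (n + 1) → ℝ) (qr : Fin n → ℝ) (hpr : StrictMono pr)
    (hint : ∀ i : Fin n, pr i.castSucc < qr i ∧ qr i < pr i.succ) (j : Fin (n + 1)) :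
    0 < eval (pr j) (rootPoly qr) / eval (pr j) (derivative (rootPoly pr)) := by
  rw [residue_eq_prod]
  refine Finset.prod_pos fun i _ => ?_
  obtain ⟨h1, h2⟩ := hint i
  rcases lt_or_ge i.castSucc j with h | h
  · rw [Fin.succAbove_of_castSucc_lt _ _ h]
    have h3 : pr i.succ ≤ pr j := hpr.monotone (Fin.castSucc_lt_iff_succ_le.mp h)
    exact div_pos (by linarith) (by linarith)
  · rw [Fin.succAbove_of_le_castSucc _ _ h]
    have h3 : pr j ≤ pr i.castSucc := hpr.monotone h
    exact div_pos_of_neg_of_neg (by linarith) (by linarith)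

lemma map_rootPoly {n : ℕ} (r : Fin n → ℝ) :
    (rootPoly r).map (algebraMap ℝ ℂ) = Lagrange.nodal Finset.univ fun i => (r i : ℂ) := by
  simp [rootPoly, Lagrange.nodal, Polynomial.map_prod]

lemma partial_fractions {k m : ℕ} (hmk : m < k) (pr : Fin k → ℝ) (qr : Fin m → ℝ)
    (hpr : Function.Injective pr) (z : ℂ) (hz : aeval z (rootPoly pr) ≠ 0) :
    aeval z (rootPoly qr) / aeval z (rootPoly pr) =
      ∑ j : Fin k,
        ((eval (pr j) (rootPoly qr) / eval (pr j) (derivative (rootPoly pr)) : ℝ) : ℂ) /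
          (z - ((pr j : ℝ) : ℂ)) := by
  set v : Fin k → ℂ := fun i => (pr i : ℂ) with hv
  have hinj : Set.InjOn v (Finset.univ : Finset (Fin k)) :=
    (Complex.ofReal_injective.comp hpr).injOn
  have hcast : ∀ (f : ℝ[X]) (x : ℝ),
      eval (x : ℂ) (f.map (algebraMap ℝ ℂ)) = ((eval x f : ℝ) : ℂ) := fun f x =>
    eval_map_apply (algebraMap ℝ ℂ) x
  have hdeg : ((rootPoly qr).map (algebraMap ℝ ℂ)).degree
      < (Finset.univ : Finset (Fin k)).card := by
    rw [map_rootPoly, Lagrange.degree_nodal]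
    simpa using hmk
  rw [aeval_def, ← eval_map, map_rootPoly] at hz
  have hne : ∀ i ∈ (Finset.univ : Finset (Fin k)), z ≠ v i := by
    rintro i hi rfl
    exact hz (Lagrange.eval_nodal_at_node hi)
  rw [aeval_def, ← eval_map, aeval_def, ← eval_map, map_rootPoly pr,
    Lagrange.eq_interpolate hinj hdeg, Lagrange.eval_interpolate_not_at_node _ hne,
    mul_div_cancel_left₀ _ hz]
  refine Finset.sum_congr rfl fun j hj => ?_
  rw [Lagrange.nodalWeight_eq_eval_derivative_nodal hj, ← map_rootPoly, derivative_map,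
    hcast, hcast]
  push_cast
  simp only [div_eq_mul_inv]
  ring

theorem stmt6 (k : ℕ) (hk : 2 ≤ k) (pr : Fin k → ℝ) (qr : Fin (k - 1) → ℝ)
    (hpr : StrictMono pr) (hqr : StrictMono qr)
    (hint : ∀ i : Fin (k - 1), pr (finLo i) < qr i ∧ qr i < pr (finHi i)) :
    (∀ j : Fin k,
      0 < eval (pr j) (rootPoly qr) / eval (pr j) (derivative (rootPoly pr))) ∧
    ∀ z : ℂ, aeval z (rootPoly pr) ≠ 0 →
      aeval z (rootPoly qr) / aeval z (rootPoly pr) =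
        ∑ j : Fin k,
          ((eval (pr j) (rootPoly qr) / eval (pr j) (derivative (rootPoly pr)) : ℝ) : ℂ) /
            (z - ((pr j : ℝ) : ℂ)) := by
  refine ⟨?_, partial_fractions (by omega) pr qr hpr.injective⟩
  -- With `k = n + 1`, `finLo` and `finHi` are definitionally `Fin.castSucc` and `Fin.succ`.
  obtain ⟨n, rfl⟩ : ∃ n, k = n + 1 := ⟨k - 1, by omega⟩
  exact residue_pos pr qr hpr hint
end

section
/- For every z ∈ ℂ with Im z > 0 one has p(z) ≠ 0 and Im(q(z)/p(z)) < 0. Consequently, if z ∈ ℂ is nonreal then q(z)/p(z) is nonreal. -/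
/-!
For `Im z > 0` and `r` real, write `z - r = c(r) exp(i θ(r))` with `c(r) > 0` and
`θ(r) ∈ (0, π)`. The angle `θ(r)` is strictly increasing in `r`. Hence `q(z)/p(z)` is a
positive multiple of `exp(i φ)` with
`φ = ∑ θ(q_i) - ∑ θ(p_i)`. Interlacing lets the sums be paired in two ways: pairing `q_i` with
`p_{i+1}` gives `φ ≤ -θ(p_1) < 0`, pairing `q_i` with `p_i` gives `φ ≥ -θ(p_k) > -π`. So
`sin φ < 0`. The case `Im z < 0` follows by complex conjugation.
-/

open Polynomial

/-- The argument of `z - r` when `0 < z.im`, written with `arctan` so that monotonicity in `r`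
is immediate. -/
noncomputable def rootAngle (z : ℂ) (r : ℝ) : ℝ :=
  Real.pi / 2 - Real.arctan ((z.re - r) / z.im)

lemma rootAngle_pos (z : ℂ) (r : ℝ) : 0 < rootAngle z r := by
  have := Real.arctan_lt_pi_div_two ((z.re - r) / z.im)
  unfold rootAngle
  linarith

lemma rootAngle_lt_pi (z : ℂ) (r : ℝ) : rootAngle z r < Real.pi := by
  have := Real.neg_pi_div_two_lt_arctan ((z.re - r) / z.im)
  unfold rootAngle
  linarith

lemma rootAngle_mono {z : ℂ} (hz : 0 < z.im) : StrictMono (rootAngle z) := by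
  intro a b hab
  have : Real.arctan ((z.re - b) / z.im) < Real.arctan ((z.re - a) / z.im) :=
    Real.arctan_strictMono (by gcongr)
  unfold rootAngle
  linarith

/-- Polar form of `z - r` in the upper half-plane. -/
lemma exists_polar {z : ℂ} (hz : 0 < z.im) (r : ℝ) :
    ∃ c : ℝ, 0 < c ∧ z - r = c * Complex.exp (rootAngle z r * Complex.I) := by
  set t : ℝ := (z.re - r) / z.im with ht
  have hs : 0 < √(1 + t ^ 2) := Real.sqrt_pos.2 (by positivity)
  refine ⟨z.im * √(1 + t ^ 2), mul_pos hz hs, ?_⟩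
  have hy := hz.ne'
  apply Complex.ext
  · rw [Complex.re_ofReal_mul, Complex.exp_ofReal_mul_I_re, rootAngle, Real.cos_pi_div_two_sub,
      ← ht, Real.sin_arctan, mul_assoc, mul_div_cancel₀ _ hs.ne', ht, mul_div_cancel₀ _ hy]
    simp
  · rw [Complex.im_ofReal_mul, Complex.exp_ofReal_mul_I_im, rootAngle, Real.sin_pi_div_two_sub,
      ← ht, Real.cos_arctan, mul_assoc, mul_div_cancel₀ _ hs.ne']
    simp

lemma rootPoly_polar {z : ℂ} (hz : 0 < z.im) {n : ℕ} (r : Fin n → ℝ) :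
    ∃ c : ℝ, 0 < c ∧ aeval z (rootPoly r) =
      c * Complex.exp ((∑ i, rootAngle z (r i) : ℝ) * Complex.I) := by
  choose c hc h using exists_polar hz
  refine ⟨∏ i, c (r i), Finset.prod_pos fun i _ => hc _, ?_⟩
  have : aeval z (rootPoly r) = ∏ i, (z - (r i : ℂ)) := by
    simp [rootPoly, map_prod]
  rw [this, Finset.prod_congr rfl fun i _ => h (r i), Finset.prod_mul_distrib,
    ← Complex.exp_sum, ← Finset.sum_mul]
  push_cast
  rfl

lemma upper_half_plane_case (k : ℕ) (hk : 2 ≤ k) (pr : Fin k → ℝ) (qr : Fin (k - 1) → ℝ)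
    (hint : ∀ i : Fin (k - 1), pr (finLo i) < qr i ∧ qr i < pr (finHi i))
    (z : ℂ) (hz : 0 < z.im) :
    aeval z (rootPoly pr) ≠ 0 ∧
      (aeval z (rootPoly qr) / aeval z (rootPoly pr)).im < 0 := by
  obtain ⟨m, rfl⟩ : ∃ m, k = m + 1 := ⟨k - 1, by omega⟩
  change Fin m → ℝ at qr
  obtain ⟨a, ha, hp⟩ := rootPoly_polar hz pr
  obtain ⟨b, hb, hq⟩ := rootPoly_polar hz qr
  have hpne : aeval z (rootPoly pr) ≠ 0 := by
    rw [hp]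
    exact mul_ne_zero (Complex.ofReal_ne_zero.2 ha.ne') (Complex.exp_ne_zero _)
  refine ⟨hpne, ?_⟩
  have hmono := rootAngle_mono hz
  have hupper : ∑ i, rootAngle z (qr i) < ∑ i, rootAngle z (pr i) := by
    rw [Fin.sum_univ_succ (fun i => rootAngle z (pr i))]
    have h : ∑ i, rootAngle z (qr i) ≤ ∑ i : Fin m, rootAngle z (pr i.succ) :=
      Finset.sum_le_sum fun i _ => (hmono (hint i).2).le
    linarith [rootAngle_pos z (pr 0)]
  have hlower : ∑ i, rootAngle z (pr i) < ∑ i, rootAngle z (qr i) + Real.pi := by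
    rw [Fin.sum_univ_castSucc (fun i => rootAngle z (pr i))]
    have h : ∑ i : Fin m, rootAngle z (pr i.castSucc) ≤ ∑ i, rootAngle z (qr i) :=
      Finset.sum_le_sum fun i _ => (hmono (hint i).1).le
    linarith [rootAngle_lt_pi z (pr (Fin.last m))]
  have hquot : aeval z (rootPoly qr) / aeval z (rootPoly pr) = ((b / a : ℝ) : ℂ) *
      Complex.exp ((∑ i, rootAngle z (qr i) - ∑ i, rootAngle z (pr i) : ℝ) * Complex.I) := by
    rw [hp, hq, mul_div_mul_comm, ← Complex.exp_sub, ← sub_mul, Complex.ofReal_div,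
      Complex.ofReal_sub]
  change (aeval z (rootPoly qr) / aeval z (rootPoly pr)).im < 0
  rw [hquot, Complex.im_ofReal_mul, Complex.exp_ofReal_mul_I_im]
  exact mul_neg_of_pos_of_neg (div_pos hb ha)
    (Real.sin_neg_of_neg_of_neg_pi_lt (by linarith) (by linarith))

theorem stmt7 (k : ℕ) (hk : 2 ≤ k) (pr : Fin k → ℝ) (qr : Fin (k - 1) → ℝ)
    (hpr : StrictMono pr) (hqr : StrictMono qr)
    (hint : ∀ i : Fin (k - 1), pr (finLo i) < qr i ∧ qr i < pr (finHi i)) :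
    (∀ z : ℂ, 0 < z.im →
      aeval z (rootPoly pr) ≠ 0 ∧
        (aeval z (rootPoly qr) / aeval z (rootPoly pr)).im < 0) ∧
    ∀ z : ℂ, z.im ≠ 0 → (aeval z (rootPoly qr) / aeval z (rootPoly pr)).im ≠ 0 := by
  have hup := upper_half_plane_case k hk pr qr hint
  refine ⟨hup, fun z hz => ?_⟩
  rcases lt_or_gt_of_ne hz with h | h
  · have h2 := (hup (starRingEnd ℂ z) (by simpa using h)).2
    rw [aeval_conj, aeval_conj, ← map_div₀, Complex.conj_im] at h2
    linarith
  · exact (hup z h).2.ne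
end

section
/- Assume additionally that p_1 = −1, p_2 = 1 and q_1 = 0. Consider the function x ↦ Re( q(z(x))/p(z(x)) ) where z(x) = x + i·√(1 − x²), defined on the open interval (−1, 1). If k > 2 this function is strictly decreasing on (−1,1); if k = 2 it is constant on (−1,1). -/
/-!
The rational function `q/p` has the partial fraction expansion `∑ j, c j / (z - p j)`, with
`c j = q(p j) / p'(p j)`. Interlacing makes every `c j` positive: matching the `i`-th root of `q`
with the `i`-th of the remaining roots of `p`, both lie on the same side of `p j`.

On the unit circle `Re (1 / (z - a)) = (x - a) / (1 - 2 a x + a ^ 2)`. For `a = ±1` this is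
constant (`∓1/2`), and for `a > 1` it is strictly decreasing in `x`. The first two roots of `p`
are `-1` and `1`; all the others exceed `1`, and there is one exactly when `k > 2`.
-/

open Polynomial

/-- The real part of `R = q/p` on the upper unit half-circle, parameterized by `x = Re z`. -/
noncomputable def circRe {k : ℕ} (pr : Fin k → ℝ) (qr : Fin (k - 1) → ℝ) (x : ℝ) : ℝ :=
  (aeval ((x : ℂ) + Complex.I * ((Real.sqrt (1 - x ^ 2) : ℝ) : ℂ)) (rootPoly qr) /
    aeval ((x : ℂ) + Complex.I * ((Real.sqrt (1 - x ^ 2) : ℝ) : ℂ)) (rootPoly pr)).re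

/-- The residue of `q/p` at the `j`-th root of `p`. -/
noncomputable def residueAt {n : ℕ} (p : Fin (n + 1) → ℝ) (q : Fin n → ℝ) (j : Fin (n + 1)) : ℝ :=
  ∏ i, (p j - q i) / (p j - p (j.succAbove i))

lemma residueAt_pos {n : ℕ} {p : Fin (n + 1) → ℝ} {q : Fin n → ℝ} (hp : StrictMono p)
    (hint : ∀ i : Fin n, p i.castSucc < q i ∧ q i < p i.succ) (j : Fin (n + 1)) :
    0 < residueAt p q j := by
  refine Finset.prod_pos fun i _ => ?_
  obtain ⟨ha, hb⟩ := hint i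
  rcases lt_or_ge i.castSucc j with h | h
  · rw [Fin.succAbove_of_castSucc_lt _ _ h]
    have h' : p i.succ ≤ p j := hp.monotone (Fin.castSucc_lt_iff_succ_le.1 h)
    exact div_pos (by linarith) (by linarith)
  · rw [Fin.succAbove_of_le_castSucc _ _ h]
    have h' : p j ≤ p i.castSucc := hp.monotone h
    exact div_pos_of_neg_of_neg (by linarith) (by linarith)

lemma aeval_rootPoly {n : ℕ} (r : Fin n → ℝ) (z : ℂ) :
    aeval z (rootPoly r) = ∏ i, (z - (r i : ℂ)) := by
  simp [rootPoly, map_prod]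

/-- Partial fractions, by Lagrange interpolation of `q` at the roots of `p`. -/
lemma div_eq_sum_residueAt {n : ℕ} {p : Fin (n + 1) → ℝ} (q : Fin n → ℝ) (hp : StrictMono p)
    {z : ℂ} (hz : ∀ i, z ≠ (p i : ℂ)) :
    aeval z (rootPoly q) / aeval z (rootPoly p) =
      ∑ j, (residueAt p q j : ℂ) * (z - (p j : ℂ))⁻¹ := by
  set v : Fin (n + 1) → ℂ := fun i => (p i : ℂ) with hv
  set Q : Polynomial ℂ := ∏ i, (X - C (q i : ℂ)) with hQ
  have hinj : Set.InjOn v (Finset.univ : Finset (Fin (n + 1))) :=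
    (Complex.ofReal_injective.comp hp.injective).injOn
  have hdeg : Q.degree < (Finset.univ : Finset (Fin (n + 1))).card := by
    rw [hQ, degree_prod]
    simp only [degree_X_sub_C, Finset.sum_const, Finset.card_univ, Fintype.card_fin, nsmul_eq_mul,
      mul_one]
    exact_mod_cast Nat.lt_succ_self n
  have key : Q.eval z = (∏ i, (z - v i)) *
      ∑ i, Lagrange.nodalWeight Finset.univ v i * (z - v i)⁻¹ * Q.eval (v i) := by
    have h := Lagrange.eval_interpolate_not_at_node (s := Finset.univ) (v := v) (x := z)
      (fun i => Q.eval (v i)) (fun i _ => hz i)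
    rwa [← Lagrange.eq_interpolate hinj hdeg, Lagrange.eval_nodal] at h
  have hne : ∏ i, (z - v i) ≠ 0 := Finset.prod_ne_zero_iff.2 fun i _ => sub_ne_zero.2 (hz i)
  have hQz : ∀ w : ℂ, Q.eval w = ∏ i, (w - (q i : ℂ)) := fun w => by simp [hQ, eval_prod]
  rw [aeval_rootPoly, aeval_rootPoly, ← hQz, key, mul_div_cancel_left₀ _ hne]
  refine Finset.sum_congr rfl fun j _ => ?_
  have hw : Lagrange.nodalWeight Finset.univ v j = ∏ i, (v j - v (j.succAbove i))⁻¹ := by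
    rw [Lagrange.nodalWeight]
    have : (Finset.univ : Finset (Fin (n + 1))).erase j =
        Finset.univ.map (Fin.succAboveEmb j) := by
      ext i
      simp [Fin.exists_succAbove_eq_iff]
    rw [this, Finset.prod_map]
    rfl
  rw [hw, hQz, residueAt, mul_right_comm, ← Finset.prod_mul_distrib]
  push_cast
  congr 1
  exact Finset.prod_congr rfl fun i _ => by rw [div_eq_mul_inv, mul_comm]

/-- The value of `Re (1 / (z - a))` at the point `z` of the unit circle with real part `x`. -/
noncomputable def circTerm (a x : ℝ) : ℝ := (x - a) / (1 - 2 * a * x + a ^ 2)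

lemma circRe_eq_sum {n : ℕ} {p : Fin (n + 1) → ℝ} (q : Fin n → ℝ) (hp : StrictMono p)
    {x : ℝ} (hx : x ∈ Set.Ioo (-1 : ℝ) 1) :
    circRe (k := n + 1) p q x = ∑ j, residueAt p q j * circTerm (p j) x := by
  have hs : 0 < 1 - x ^ 2 := by nlinarith [hx.1, hx.2]
  have hsq := Real.sq_sqrt hs.le
  have hpos := Real.sqrt_pos.2 hs
  rw [circRe]
  set s := Real.sqrt (1 - x ^ 2)
  have hz : ∀ i, (x : ℂ) + Complex.I * (s : ℂ) ≠ (p i : ℂ) := fun i h => by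
    have := congrArg Complex.im h
    simp at this
    exact hpos.ne' this
  rw [show aeval ((x : ℂ) + Complex.I * (s : ℂ)) (rootPoly (n := n + 1 - 1) q) =
    aeval ((x : ℂ) + Complex.I * (s : ℂ)) (rootPoly (n := n) q) from rfl,
    div_eq_sum_residueAt q hp hz, Complex.re_sum]
  refine Finset.sum_congr rfl fun j _ => ?_
  rw [Complex.re_ofReal_mul, Complex.inv_re, circTerm]
  congr 2
  · simp
  · simp [Complex.normSq_apply]
    nlinarith

lemma circTerm_neg_one {x : ℝ} (hx : x ∈ Set.Ioo (-1 : ℝ) 1) : circTerm (-1) x = 1 / 2 := by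
  have : 1 + x ≠ 0 := by linarith [hx.1]
  rw [circTerm, div_eq_div_iff (by intro h; apply this; linarith) two_ne_zero]
  ring

lemma circTerm_one {x : ℝ} (hx : x ∈ Set.Ioo (-1 : ℝ) 1) : circTerm 1 x = -1 / 2 := by
  have : 1 - x ≠ 0 := by linarith [hx.2]
  rw [circTerm, div_eq_div_iff (by intro h; apply this; linarith) two_ne_zero]
  ring

lemma circTerm_strictAntiOn {a : ℝ} (ha : 1 < a) :
    StrictAntiOn (circTerm a) (Set.Ioo (-1 : ℝ) 1) := by
  have hden : ∀ x ∈ Set.Ioo (-1 : ℝ) 1, 0 < 1 - 2 * a * x + a ^ 2 := fun x hx => by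
    nlinarith [hx.2, sq_nonneg (a - 1)]
  intro x hx y hy hxy
  rw [circTerm, circTerm, div_lt_div_iff₀ (hden y hy) (hden x hx)]
  -- The difference of the two cross products is `(a ^ 2 - 1) * (y - x)`.
  nlinarith [mul_pos (show 0 < a ^ 2 - 1 by nlinarith) (sub_pos.2 hxy)]

theorem stmt14 (k : ℕ) (hk : 2 ≤ k) (pr : Fin k → ℝ) (qr : Fin (k - 1) → ℝ)
    (hpr : StrictMono pr) (hqr : StrictMono qr)
    (hint : ∀ i : Fin (k - 1), pr (finLo i) < qr i ∧ qr i < pr (finHi i))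
    (h1 : pr ⟨0, by omega⟩ = -1) (h2 : pr ⟨1, by omega⟩ = 1)
    (h3 : qr ⟨0, by omega⟩ = 0) :
    (2 < k → StrictAntiOn (circRe pr qr) (Set.Ioo (-1 : ℝ) 1)) ∧
    (k = 2 → ∀ x ∈ Set.Ioo (-1 : ℝ) 1, ∀ y ∈ Set.Ioo (-1 : ℝ) 1,
      circRe pr qr x = circRe pr qr y) := by
  obtain ⟨n, rfl⟩ : ∃ n, k = n + 1 := ⟨k - 1, by omega⟩
  have hc : ∀ j, 0 < residueAt pr qr j := residueAt_pos hpr hint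
  have hbig : ∀ j : Fin (n + 1), 2 ≤ j.1 → 1 < pr j := fun j hj => by
    rw [← h2]
    exact hpr (Fin.mk_lt_of_lt_val (by omega))
  -- The terms of the roots `-1` and `1` do not depend on the point.
  have hsmall : ∀ j : Fin (n + 1), j.1 < 2 → ∀ x ∈ Set.Ioo (-1 : ℝ) 1,
      ∀ y ∈ Set.Ioo (-1 : ℝ) 1, circTerm (pr j) x = circTerm (pr j) y := by
    intro j hj x hx y hy
    have : j.1 = 0 ∨ j.1 = 1 := by omega
    rcases this with h | h
    · rw [show j = ⟨0, by omega⟩ from Fin.ext h, h1, circTerm_neg_one hx, circTerm_neg_one hy]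
    · rw [show j = ⟨1, by omega⟩ from Fin.ext h, h2, circTerm_one hx, circTerm_one hy]
  refine ⟨fun hk2 x hx y hy hxy => ?_, fun hk2 x hx y hy => ?_⟩
  · rw [circRe_eq_sum qr hpr hx, circRe_eq_sum qr hpr hy]
    refine Finset.sum_lt_sum (fun j _ => mul_le_mul_of_nonneg_left ?_ (hc j).le)
      ⟨⟨2, hk2⟩, Finset.mem_univ _, mul_lt_mul_of_pos_left
        (circTerm_strictAntiOn (hbig _ le_rfl) hx hy hxy) (hc _)⟩
    rcases lt_or_ge j.1 2 with h | h
    · exact (hsmall j h y hy x hx).le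
    · exact (circTerm_strictAntiOn (hbig j h) hx hy hxy).le
  · rw [circRe_eq_sum qr hpr hx, circRe_eq_sum qr hpr hy]
    exact Finset.sum_congr rfl fun j _ => by rw [hsmall j (by omega) x hx y hy]
end
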